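/- arXiv:2305.17014 — 2 statements merged into one kernel-verified Lean document; each statement's English description precedes it below -/
import Mathlib

section
/- For every integer q ≥ 2, every bipartite egr(n, q²+q+1, 4, q³+q²) graph satisfies n ≥ 2(q³+q²+q+1). -/
open SimpleGraph

/-- `G` is an edge-girth-regular graph with parameters `(n, k, g, lam)`:
a finite simple graph on `n` vertices, `k`-regular, of girth `g`, in which every
edge lies on exactly `lam` cycles of length `g` (each such cycle corresponds to
exactly two closed walks based at an endpoint of the edge and traversing it). -/
def SimpleGraph.IsEGR {V : Type*} (G : SimpleGraph V) (n k g lam : ℕ) : Prop :=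
  Finite V ∧ Nat.card V = n ∧
    (∀ v : V, (G.neighborSet v).ncard = k) ∧
    G.egirth = (g : ℕ∞) ∧
    ∀ u v : V, G.Adj u v →
      Nat.card {p : G.Walk u u // p.IsCycle ∧ p.length = g ∧ s(u, v) ∈ p.edges} = 2 * lam

/-- The number of closed walks of length `l` based at `v`. -/
noncomputable def SimpleGraph.closedWalkCount {V : Type*} (G : SimpleGraph V) (v : V) (l : ℕ) : ℕ :=
  Nat.card {p : G.Walk v v // p.length = l}

/-- The number of cycle-free closed walks of length `l` based at `v`,
i.e. closed walks whose traversed edges form an acyclic subgraph. -/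
noncomputable def SimpleGraph.cycleFreeClosedWalkCount {V : Type*} (G : SimpleGraph V) (v : V)
    (l : ℕ) : ℕ :=
  Nat.card {p : G.Walk v v // p.length = l ∧ p.toSubgraph.coe.IsAcyclic}

/-!
Let every vertex have degree `d + 1` and every edge lie on at most `λ` 4-cycles, fix a vertex `u`,
and let `c w` be the number of common neighbours of `u` and another vertex `w`. Counting the paths
`u, v, w` gives `∑ c w = (d + 1) d`. A 4-cycle through the edge `uv` is a choice of `w ≠ u` adjacent
to `v` together with a common neighbour of `u` and `w` other than `v`, so
`∑ (c w) ^ 2 ≤ (d + 1) (d + λ)`. By Cauchy–Schwarz at least `(d + 1) d ^ 2 / (d + λ)` vertices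
`w ≠ u` share a neighbour with `u`; for `d = q ^ 2 + q` and `λ = q ^ 3 + q ^ 2` this is
`q ^ 3 + q ^ 2 + q`. In a bipartite graph these vertices lie on the side of `u`, so the bound at
both ends of an edge bounds the two sides separately.
-/

section SecondNeighbors

variable {V : Type*} [DecidableEq V] (G : SimpleGraph V) [G.LocallyFinite]

/-- The vertices `w ≠ u` that have a common neighbour with `u`. In a triangle-free graph this is the
sphere of radius two around `u`, but neighbours of `u` lying on a triangle with `u` also belong
to it. -/
def secondNeighborFinset (u : V) : Finset V :=
  ((G.neighborFinset u).biUnion fun v => G.neighborFinset v).erase u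

/-- The number of common neighbours of two vertices; its sum and its sum of squares over
`secondNeighborFinset G u` are governed by the paths of length two from `u` and the 4-cycles
through `u`. -/
def codegree (u w : V) : ℕ :=
  (G.neighborFinset u ∩ G.neighborFinset w).card

/-- For adjacent `u` and `v`, the pairs `(w, b)` such that `u, v, w, b` are the consecutive vertices
of a 4-cycle, so that each 4-cycle through the edge `uv` is represented exactly once. They are
encoded as dependent pairs in order to be counted fibrewise over `w`. -/
def squareCompletions (u v : V) : Finset (Σ _ : V, V) :=
  ((G.neighborFinset v).erase u).sigma fun w => (G.neighborFinset u ∩ G.neighborFinset w).erase v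

variable {G} {u v w b : V}

lemma mem_secondNeighborFinset :
    w ∈ secondNeighborFinset G u ↔ w ≠ u ∧ ∃ v, G.Adj u v ∧ G.Adj v w := by
  simp [secondNeighborFinset]

lemma mem_squareCompletions :
    ⟨w, b⟩ ∈ squareCompletions G u v ↔
      (w ≠ u ∧ G.Adj v w) ∧ b ≠ v ∧ G.Adj u b ∧ G.Adj w b := by
  simp [squareCompletions]

lemma card_neighborFinset_erase (huv : G.Adj u v) :
    ((G.neighborFinset v).erase u).card + 1 = G.degree v :=
  Finset.card_erase_add_one (by simpa using huv.symm)

lemma sum_codegree_smul {M : Type*} [AddCommMonoid M] (u : V) (F : V → M) :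
    ∑ w ∈ secondNeighborFinset G u, codegree G u w • F w =
      ∑ v ∈ G.neighborFinset u, ∑ w ∈ (G.neighborFinset v).erase u, F w := by
  simp only [codegree, ← Finset.sum_const]
  refine Finset.sum_comm' fun w v => ?_
  simp only [mem_secondNeighborFinset, Finset.mem_inter, Finset.mem_erase, mem_neighborFinset,
    G.adj_comm w v]
  tauto

lemma sum_codegree_neighborFinset_erase (huv : G.Adj u v) :
    ∑ w ∈ (G.neighborFinset v).erase u, codegree G u w =
      ((G.neighborFinset v).erase u).card + (squareCompletions G u v).card := by
  have hcodegree : ∀ w ∈ (G.neighborFinset v).erase u,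
      codegree G u w = 1 + ((G.neighborFinset u ∩ G.neighborFinset w).erase v).card := by
    intro w hw
    have hvw : G.Adj v w := by simpa using Finset.mem_of_mem_erase hw
    rw [add_comm, Finset.card_erase_add_one (by simp [huv, hvw.symm]), codegree]
  rw [Finset.sum_congr rfl hcodegree, Finset.sum_add_distrib, Finset.card_eq_sum_ones,
    squareCompletions, Finset.card_sigma]

lemma degree_mul_sq_le_card_secondNeighborFinset_mul {d lam : ℕ}
    (hdeg : ∀ v, G.Adj u v → G.degree v = d + 1)
    (hsq : ∀ v, G.Adj u v → (squareCompletions G u v).card ≤ lam) :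
    G.degree u * d ^ 2 ≤ (secondNeighborFinset G u).card * (d + lam) := by
  have herase : ∀ v, G.Adj u v → ((G.neighborFinset v).erase u).card = d := fun v huv =>
    Nat.succ_injective <| (card_neighborFinset_erase huv).trans (hdeg v huv)
  have hfirst : ∑ w ∈ secondNeighborFinset G u, codegree G u w = G.degree u * d := by
    have hpaths := sum_codegree_smul (G := G) u fun _ => 1
    simp only [smul_eq_mul, mul_one, ← Finset.card_eq_sum_ones] at hpaths
    rw [hpaths, Finset.sum_const_nat fun v hv => herase v (by simpa using hv),
      card_neighborFinset_eq_degree]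
  have hsecond : ∑ w ∈ secondNeighborFinset G u, codegree G u w ^ 2 ≤ G.degree u * (d + lam) := by
    simp only [sq, ← smul_eq_mul (codegree G u _)]
    rw [sum_codegree_smul, ← card_neighborFinset_eq_degree, ← smul_eq_mul]
    refine Finset.sum_le_card_nsmul _ _ _ fun v hv => ?_
    have huv : G.Adj u v := by simpa using hv
    rw [sum_codegree_neighborFinset_erase huv, herase v huv]
    exact Nat.add_le_add_left (hsq v huv) d
  rcases (G.degree u).eq_zero_or_pos with hu | hu
  · simp [hu]
  refine Nat.le_of_mul_le_mul_left ?_ hu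
  calc G.degree u * (G.degree u * d ^ 2)
      = (∑ w ∈ secondNeighborFinset G u, codegree G u w) ^ 2 := by rw [hfirst]; ring
    _ ≤ (secondNeighborFinset G u).card * ∑ w ∈ secondNeighborFinset G u, codegree G u w ^ 2 :=
        sq_sum_le_card_mul_sum_sq
    _ ≤ (secondNeighborFinset G u).card * (G.degree u * (d + lam)) :=
        Nat.mul_le_mul_left _ hsecond
    _ = G.degree u * ((secondNeighborFinset G u).card * (d + lam)) := by ring

end SecondNeighbors

section SquareWalks

variable {V : Type*} {G : SimpleGraph V} {u v : V}

/-- The closed walk `u, v, w, b, u`, by which a member `(w, b)` of `squareCompletions G u v` becomes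
a cycle in the sense of `Walk.IsCycle`; its reverse gives the other orientation. -/
def squareWalk {w b : V} (huv : G.Adj u v) (hvw : G.Adj v w) (hwb : G.Adj w b) (hbu : G.Adj b u) :
    G.Walk u u :=
  .cons huv (.cons hvw (.cons hwb (.cons hbu .nil)))

lemma isCycle_squareWalk {w b : V} (huv : G.Adj u v) (hvw : G.Adj v w) (hwb : G.Adj w b)
    (hbu : G.Adj b u) (hwu : w ≠ u) (hbv : b ≠ v) :
    (squareWalk huv hvw hwb hbu).IsCycle := by
  have := huv.ne
  have := hvw.ne
  have := hwb.ne
  have := hbu.ne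
  rw [squareWalk, Walk.cons_isCycle_iff]
  simp only [Walk.isPath_def, Walk.support_cons, Walk.support_nil, Walk.edges_cons, Walk.edges_nil]
  grind

lemma finite_cycles_through (G : SimpleGraph V) [G.LocallyFinite] (g : ℕ) (u v : V) :
    Finite {p : G.Walk u u // p.IsCycle ∧ p.length = g ∧ s(u, v) ∈ p.edges} := by
  classical
  exact .of_injective (β := {p : G.Walk u u // p.length = g}) (Subtype.map id fun _ hp => hp.2.1)
    (Subtype.map_injective _ Function.injective_id)

lemma two_mul_card_squareCompletions_le [DecidableEq V] [G.LocallyFinite] (huv : G.Adj u v) :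
    2 * (squareCompletions G u v).card ≤
      Nat.card {p : G.Walk u u // p.IsCycle ∧ p.length = 4 ∧ s(u, v) ∈ p.edges} := by
  have := finite_cycles_through G 4 u v
  have hmem (x : squareCompletions G u v) := mem_squareCompletions.1 x.2
  let walk (x : squareCompletions G u v) : G.Walk u u :=
    squareWalk huv (hmem x).1.2 (hmem x).2.2.2 (hmem x).2.2.1.symm
  have hsupport (x) : (walk x).support = [u, v, x.1.1, x.1.2, u] := rfl
  let cycle (x : squareCompletions G u v) :
      {p : G.Walk u u // p.IsCycle ∧ p.length = 4 ∧ s(u, v) ∈ p.edges} :=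
    ⟨walk x, isCycle_squareWalk _ _ _ _ (hmem x).1.1 (hmem x).2.1, rfl, List.mem_cons_self⟩
  let reversed (x : squareCompletions G u v) :
      {p : G.Walk u u // p.IsCycle ∧ p.length = 4 ∧ s(u, v) ∈ p.edges} :=
    ⟨(walk x).reverse, (cycle x).2.1.reverse, by simpa using (cycle x).2.2⟩
  have hcycle : Function.Injective cycle := by
    intro x y hxy
    have hs : (walk x).support = (walk y).support := congrArg (·.1.support) hxy
    grind
  have hreversed : Function.Injective reversed := fun x y hxy =>
    hcycle <| Subtype.ext <| Walk.reverse_injective <| congrArg Subtype.val hxy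
  have hne (x y) : cycle x ≠ reversed y := by
    intro hxy
    have hsnd : v = y.1.2 := congrArg (·.1.snd) hxy
    exact (hmem y).2.1 hsnd.symm
  simpa [two_mul] using Nat.card_le_card_of_injective _ (hcycle.sumElim hreversed hne)

end SquareWalks

section Bipartite

variable {V : Type*} [DecidableEq V] {G : SimpleGraph V} [G.LocallyFinite] {u v : V}

lemma color_eq_of_mem_insert_secondNeighborFinset (C : G.Coloring (Fin 2)) {w : V}
    (hw : w ∈ insert u (secondNeighborFinset G u)) : C w = C u := by
  rcases Finset.mem_insert.1 hw with rfl | hw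
  · rfl
  · obtain ⟨-, x, hux, hxw⟩ := mem_secondNeighborFinset.1 hw
    have hux := C.valid hux
    have hxw := C.valid hxw
    omega

lemma card_secondNeighborFinset_add_le [Finite V] (hbip : G.Colorable 2) (huv : G.Adj u v) :
    ((secondNeighborFinset G u).card + 1) + ((secondNeighborFinset G v).card + 1) ≤
      Nat.card V := by
  obtain ⟨C⟩ := hbip
  have := Fintype.ofFinite V
  have hdisj : Disjoint (insert u (secondNeighborFinset G u))
      (insert v (secondNeighborFinset G v)) :=
    Finset.disjoint_left.2 fun w hwu hwv => C.valid huv <|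
      (color_eq_of_mem_insert_secondNeighborFinset C hwu).symm.trans
        (color_eq_of_mem_insert_secondNeighborFinset C hwv)
  have hinsert (x : V) :
      (insert x (secondNeighborFinset G x)).card = (secondNeighborFinset G x).card + 1 :=
    Finset.card_insert_of_notMem (Finset.notMem_erase x _)
  rw [← hinsert, ← hinsert, ← Finset.card_union_of_disjoint hdisj, Nat.card_eq_fintype_card]
  exact Finset.card_le_univ _

end Bipartite

lemma nonempty_of_egirth_ne_top {V : Type*} {G : SimpleGraph V} (hG : G.egirth ≠ ⊤) :
    Nonempty V := by
  by_contra hV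
  have := not_nonempty_iff.1 hV
  exact hG (egirth_eq_top.2 .of_subsingleton)

theorem bipartite_egr_pencil_lower_bound_general {V : Type*} [Finite V] [Nonempty V]
    (G : SimpleGraph V) (hbip : G.Colorable 2) {d lam : ℕ}
    (hreg : ∀ v : V, (G.neighborSet v).ncard = d + 1)
    (hcyc : ∀ u v : V, G.Adj u v →
      Nat.card {p : G.Walk u u // p.IsCycle ∧ p.length = 4 ∧ s(u, v) ∈ p.edges} ≤ 2 * lam) :
    2 * ((d + 1) * d ^ 2 + (d + lam)) ≤ Nat.card V * (d + lam) := by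
  classical
  have := Fintype.ofFinite V
  have hdeg (v : V) : G.degree v = d + 1 := by
    rw [← hreg v, ← card_neighborSet_eq_degree, Set.ncard_eq_toFinset_card', Set.toFinset_card]
  have hlocal (x : V) : (d + 1) * d ^ 2 ≤ (secondNeighborFinset G x).card * (d + lam) := by
    rw [← hdeg x]
    refine degree_mul_sq_le_card_secondNeighborFinset_mul (fun v _ => hdeg v) fun v hxv => ?_
    exact Nat.le_of_mul_le_mul_left
      ((two_mul_card_squareCompletions_le hxv).trans (hcyc x v hxv)) two_pos
  obtain ⟨u⟩ := ‹Nonempty V›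
  obtain ⟨v, huv⟩ : ∃ v, G.Adj u v :=
    (G.degree_pos_iff_exists_adj u).1 (by rw [hdeg]; exact d.succ_pos)
  calc 2 * ((d + 1) * d ^ 2 + (d + lam))
      = ((d + 1) * d ^ 2 + (d + 1) * d ^ 2) + 2 * (d + lam) := by ring
    _ ≤ ((secondNeighborFinset G u).card * (d + lam) +
          (secondNeighborFinset G v).card * (d + lam)) + 2 * (d + lam) :=
        Nat.add_le_add_right (Nat.add_le_add (hlocal u) (hlocal v)) _
    _ = (((secondNeighborFinset G u).card + 1) + ((secondNeighborFinset G v).card + 1)) *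
          (d + lam) := by ring
    _ ≤ Nat.card V * (d + lam) :=
        Nat.mul_le_mul_right _ (card_secondNeighborFinset_add_le hbip huv)

/-- For every integer `q ≥ 2`, every bipartite `egr(n, q²+q+1, 4, q³+q²)` graph
satisfies `n ≥ 2(q³+q²+q+1)`. -/
theorem bipartite_egr_pencil_lower_bound (q : ℕ) (hq : 2 ≤ q) (n : ℕ) {V : Type*}
    (G : SimpleGraph V) (hbip : G.Colorable 2)
    (h : G.IsEGR n (q ^ 2 + q + 1) 4 (q ^ 3 + q ^ 2)) :
    2 * (q ^ 3 + q ^ 2 + q + 1) ≤ n := by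
  obtain ⟨_, rfl, hreg, hgirth, hcyc⟩ := h
  have : Nonempty V := nonempty_of_egirth_ne_top (hgirth ▸ ENat.natCast_ne_top 4)
  have hbound := bipartite_egr_pencil_lower_bound_general G hbip hreg fun u v huv =>
    (hcyc u v huv).le
  have hpos : 0 < (q ^ 2 + q) + (q ^ 3 + q ^ 2) := by positivity
  refine Nat.le_of_mul_le_mul_right ?_ hpos
  calc 2 * (q ^ 3 + q ^ 2 + q + 1) * ((q ^ 2 + q) + (q ^ 3 + q ^ 2))
      = 2 * ((q ^ 2 + q + 1) * (q ^ 2 + q) ^ 2 + ((q ^ 2 + q) + (q ^ 3 + q ^ 2))) := by ring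
    _ ≤ Nat.card V * ((q ^ 2 + q) + (q ^ 3 + q ^ 2)) := hbound
end

section
/- Let q ≥ 2 be an integer and let G be a bipartite egr(2(q³+q²+q+1), q²+q+1, 4, q³+q²) graph. Then the characteristic polynomial over ℝ of the adjacency matrix of G equals (X−(q²+q+1))·(X+(q²+q+1))·(X²−q²)^{q³+q²+q}; that is, the spectrum of G is {−(q²+q+1) with multiplicity 1, −q with multiplicity q³+q²+q, q with multiplicity q³+q²+q, q²+q+1 with multiplicity 1}. -/
open SimpleGraph

/-!
In a `k`-regular graph of girth `4` whose edges all lie on `lam` cycles of length `4`, counting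
walks of length `3` gives `(A ^ 3) v u = lam + 2 * k - 1` for every edge `vu`. Fix a vertex `u` of
a bipartite such graph. The numbers `(A ^ 2) u w`, for `w ≠ u` in the colour class of `u`, then have
a sum and a sum of squares that are determined by the parameters. When `lam = (k - 1) * (μ - 1)`
and `μ` is the mean, their variance vanishes, so any two vertices of the same class have
exactly `μ` common neighbours: the graph is the incidence graph of a symmetric design, and `A ^ 2`
is `k - μ` on the diagonal plus `μ` on each of the two diagonal blocks.

Since `A` and `-A` are similar, `χ_A(X) ^ 2 = χ_A(X) * χ_{-A}(X) = χ_{A ^ 2}(X ^ 2)`, and a monic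
polynomial is determined by its square.
-/

open Finset Matrix Polynomial

section Cycles

variable {V : Type*} {G : SimpleGraph V} {u v : V}

lemma isCycle_cons_iff_isPath {p : G.Walk v u} (h : G.Adj u v) (hp : p.length ≠ 1) :
    (Walk.cons h p).IsCycle ↔ p.IsPath := by
  rw [Walk.cons_isCycle_iff, and_iff_left_iff_imp]
  exact fun hpath hmem ↦ hp (hpath.length_eq_one_of_mem_edges (Sym2.eq_swap ▸ hmem))

lemma eq_snd_or_eq_penultimate_of_isCycle {p : G.Walk u u} (hp : p.IsCycle)
    (hv : s(u, v) ∈ p.edges) : v = p.snd ∨ v = p.penultimate := by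
  have : v ∈ p.toSubgraph.neighborSet u := Walk.adj_toSubgraph_iff_mem_edges.2 hv
  rwa [hp.neighborSet_toSubgraph_endpoint] at this

-- Exactly one of a cycle through `uv` and its reverse leaves `u` along `uv`.
lemma card_isCycle_mem_edges {n : ℕ} (h : G.Adj u v) (hn : n ≠ 1) :
    Nat.card {p : G.Walk u u // p.IsCycle ∧ p.length = n + 1 ∧ s(u, v) ∈ p.edges} =
      2 * Nat.card {p : G.Walk v u // p.IsPath ∧ p.length = n} := by
  let P := {p : G.Walk v u // p.IsPath ∧ p.length = n}
  let Q := {p : G.Walk u u // p.IsCycle ∧ p.length = n + 1 ∧ s(u, v) ∈ p.edges}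
  let close (p : P) : Q :=
    ⟨.cons h p.1, (isCycle_cons_iff_isPath h (by rwa [p.2.2])).2 p.2.1, by simp [p.2.2], by simp⟩
  let rev (p : Q) : Q := ⟨p.1.reverse, by simpa using p.2⟩
  have exists_close {p : Q} (hp : v = p.1.snd) : ∃ p', close p' = p := by
    obtain ⟨_ | ⟨h', p⟩, hcyc, hlen, _⟩ := p
    · exact absurd hcyc Walk.not_isCycle_nil
    · obtain rfl : v = _ := by simpa using hp
      exact ⟨⟨p, ((Walk.cons_isCycle_iff p h').1 hcyc).1, by simpa using hlen⟩, rfl⟩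
  have close_injective : Function.Injective close := fun p p' hpp ↦
    Subtype.ext (by simpa [close] using congrArg (·.1) hpp)
  have rev_rev : Function.Involutive rev := fun p ↦ by simp [rev]
  have close_ne_rev (p p') : close p ≠ rev (close p') := fun hpp ↦
    (close p).2.1.snd_ne_penultimate <| by
      conv_rhs => rw [hpp, Walk.penultimate_reverse]
      simp [close]
  have bij : Function.Bijective (Sum.elim close (rev ∘ close)) := by
    refine ⟨close_injective.sumElim (rev_rev.injective.comp close_injective) close_ne_rev,
      fun p ↦ ?_⟩
    rcases eq_snd_or_eq_penultimate_of_isCycle p.2.1 p.2.2.2 with hv | hv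
    · obtain ⟨p', rfl⟩ := exists_close hv
      exact ⟨.inl p', rfl⟩
    · obtain ⟨p', hp'⟩ := exists_close (p := rev p) (hv.trans (Walk.snd_reverse _).symm)
      exact ⟨.inr p', by simp [hp', rev_rev p]⟩
  calc Nat.card Q
    _ = Nat.card (Bool × P) :=
      (Nat.card_congr ((Equiv.boolProdEquivSum P).trans (.ofBijective _ bij))).symm
    _ = 2 * Nat.card P := by rw [Nat.card_prod, Nat.card_eq_fintype_card, Fintype.card_bool]

end Cycles

section Walks

variable {V R : Type*} [Fintype V] [DecidableEq V] {G : SimpleGraph V} [DecidableRel G.Adj]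
  {u v w : V}

lemma adjMatrix_sq_apply [Semiring R] (u w : V) :
    (G.adjMatrix R ^ 2) u w = #(G.neighborFinset u ∩ G.neighborFinset w) := by
  rw [sq, adjMatrix_mul_apply]
  simp [adjMatrix_apply, adj_comm _ _ w, ← filter_mem_eq_inter]

lemma adjMatrix_sq_apply_of_color_ne [Semiring R] (c : G.Coloring (Fin 2)) (h : c u ≠ c w) :
    (G.adjMatrix R ^ 2) u w = 0 := by
  have hdisj : Disjoint (G.neighborFinset u) (G.neighborFinset w) :=
    disjoint_left.2 fun v hu hw ↦ by
      have := c.valid ((G.mem_neighborFinset u v).1 hu)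
      have := c.valid ((G.mem_neighborFinset w v).1 hw)
      omega
  rw [adjMatrix_sq_apply, disjoint_iff_inter_eq_empty.1 hdisj, card_empty, Nat.cast_zero]

lemma card_isPath_length_eq_three (h : v ≠ u) :
    Nat.card {p : G.Walk v u // p.IsPath ∧ p.length = 3} =
      ∑ w ∈ (G.neighborFinset v).erase u,
        #((G.neighborFinset w ∩ G.neighborFinset u).erase v) := by
  let T := ((G.neighborFinset v).erase u).sigma
    fun w ↦ (G.neighborFinset w ∩ G.neighborFinset u).erase v
  have mem_T {w x : V} :
      ⟨w, x⟩ ∈ T ↔ (w ≠ u ∧ G.Adj v w) ∧ x ≠ v ∧ G.Adj w x ∧ G.Adj u x := by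
    simp [T]
  have isPath_iff {w x : V} (hvw : G.Adj v w) (hwx : G.Adj w x) (hxu : G.Adj x u) :
      (Walk.cons hvw (.cons hwx (.cons hxu .nil))).IsPath ↔ w ≠ u ∧ x ≠ v := by
    simp [Walk.isPath_def, hvw.ne, hwx.ne, hxu.ne, h, eq_comm (a := x), and_comm]
  let toPath (z : T) : {p : G.Walk v u // p.IsPath ∧ p.length = 3} :=
    have hz := mem_T.1 z.2
    ⟨.cons hz.1.2 (.cons hz.2.2.1 (.cons hz.2.2.2.symm .nil)),
      (isPath_iff _ _ _).2 ⟨hz.1.1, hz.2.1⟩, rfl⟩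
  have bij : Function.Bijective toPath := by
    constructor
    · rintro ⟨⟨w, x⟩, _⟩ ⟨⟨w', x'⟩, _⟩ hz
      have := congrArg (·.1.support) hz
      simp_all [toPath]
    · rintro ⟨p, hp, hlen⟩
      match p, hlen with
      | .cons (v := w) hvw (.cons (v := x) hwx (.cons hxu .nil)), _ =>
        obtain ⟨hwu, hxv⟩ := (isPath_iff hvw hwx hxu).1 hp
        exact ⟨⟨⟨w, x⟩, mem_T.2 ⟨⟨hwu, hvw⟩, hxv, hwx, hxu.symm⟩⟩, rfl⟩
  rw [← card_sigma, ← Nat.card_eq_of_bijective toPath bij, Nat.card_eq_finsetCard]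

-- The non-paths of length `3` between adjacent vertices are `v x v u` and `v u x u`, and these
-- agree only for `v u v u`.
lemma adjMatrix_pow_three_apply [Ring R] (h : G.Adj v u) :
    (G.adjMatrix R ^ 3) v u =
      Nat.card {p : G.Walk v u // p.IsPath ∧ p.length = 3} + G.degree u + G.degree v - 1 := by
  have hu : u ∈ G.neighborFinset v := by simpa using h
  have card_erase (w) (hw : w ∈ (G.neighborFinset v).erase u) :
      (#((G.neighborFinset w ∩ G.neighborFinset u).erase v) : R) =
        #(G.neighborFinset w ∩ G.neighborFinset u) - 1 := by
    rw [cast_card_erase_of_mem]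
    simp_all [adj_comm]
  rw [card_isPath_length_eq_three h.ne, Nat.cast_sum, sum_congr rfl card_erase, sum_sub_distrib,
    pow_succ', adjMatrix_mul_apply, ← add_sum_erase _ _ hu]
  simp only [adjMatrix_sq_apply, inter_self, card_neighborFinset_eq_degree, sum_const,
    cast_card_erase_of_mem hu, nsmul_eq_mul, mul_one]
  abel

lemma sum_adjMatrix_pow_apply [Semiring R] {k : ℕ} (hk : G.IsRegularOfDegree k) (n : ℕ) (u : V) :
    ∑ w, (G.adjMatrix R ^ n) u w = (k : R) ^ n := by
  induction n generalizing u with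
  | zero => simp [one_apply]
  | succ n ih =>
    simp only [pow_succ', adjMatrix_mul_apply]
    rw [sum_comm]
    simp [ih, hk.degree_eq]

lemma sum_sq_adjMatrix_sq_apply [CommSemiring R] (u : V) :
    ∑ w, (G.adjMatrix R ^ 2) u w ^ 2 = ∑ v ∈ G.neighborFinset u, (G.adjMatrix R ^ 3) v u := by
  rw [← adjMatrix_mul_apply, ← pow_succ', show 3 + 1 = 2 + 2 from rfl, pow_add, mul_apply]
  exact sum_congr rfl fun w _ ↦ by rw [sq, ((isSymm_adjMatrix (α := R) G).pow 2).apply]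

end Walks

section Charpoly

variable {V R : Type*} [Fintype V] [DecidableEq V] [CommRing R]

lemma charpoly_mul_charpoly_neg (A : Matrix V V R) :
    A.charpoly * (-A).charpoly = expand R 2 (A ^ 2).charpoly := by
  have hcomm : Commute (scalar V X) (C.mapMatrix A) :=
    scalar_commute _ (fun _ ↦ Commute.all _ _) _
  have hmul : A.charmatrix * (-A).charmatrix = (A ^ 2).charmatrix.map (expand R 2) :=
    calc A.charmatrix * (-A).charmatrix
      _ = scalar V X ^ 2 - C.mapMatrix A ^ 2 := by
        rw [charmatrix, charmatrix, map_neg, sub_neg_eq_add, sq, sq,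
          hcomm.mul_self_sub_mul_self_eq']
      _ = (A ^ 2).charmatrix.map (expand R 2) := by
        rw [← map_pow, ← map_pow]
        ext1 i j
        by_cases hij : i = j <;> simp [hij]
  rw [charpoly, charpoly, ← det_mul, hmul, charpoly, AlgHom.map_det, AlgHom.mapMatrix_apply]

-- Conjugation by the diagonal matrix of the signs of the two colour classes negates `A`.
lemma charpoly_neg_adjMatrix {G : SimpleGraph V} [DecidableRel G.Adj] (c : G.Coloring (Fin 2)) :
    (-G.adjMatrix R).charpoly = (G.adjMatrix R).charpoly := by
  let ε (v : V) : R := if c v = 0 then 1 else -1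
  have ε_mul_ε (v : V) : ε v * ε v = 1 := by simp only [ε]; split_ifs <;> simp
  have hD : diagonal ε * diagonal ε = 1 := by simp [diagonal_mul_diagonal, ε_mul_ε]
  have hconj : diagonal ε * G.adjMatrix R * diagonal ε = -G.adjMatrix R := by
    ext v w
    rw [mul_diagonal, diagonal_mul, neg_apply, adjMatrix_apply]
    split_ifs with h
    · have hvw : c v = 0 ↔ c w ≠ 0 := by have := c.valid h; omega
      by_cases hw : c w = 0 <;> simp [ε, hvw, hw]
    · simp
  rw [← hconj, charpoly_mul_comm, ← mul_assoc, hD, one_mul]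

-- The matrix is `b • U * Uᵀ` for the incidence matrix `U` of the fibres, and `Uᵀ * U` is scalar.
lemma charpoly_smul_one_submatrix {ι : Type*} [Fintype ι] [DecidableEq ι] {m : ℕ} {f : V → ι}
    (hf : ∀ i, #{v | f v = i} = m + 1) (b : R) :
    (b • (1 : Matrix ι ι R).submatrix f f).charpoly =
      X ^ (Fintype.card ι * m) * (X - C (b * (m + 1))) ^ Fintype.card ι := by
  have hV : Fintype.card V = Fintype.card ι * m + Fintype.card ι := by
    rw [← card_univ, card_eq_sum_card_fiberwise (f := f) (t := univ) (by simp)]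
    simp [hf, mul_add]
  let U := (1 : Matrix ι ι R).submatrix f id
  have hUU : U * Uᵀ = (1 : Matrix ι ι R).submatrix f f := by
    rw [transpose_submatrix, ← submatrix_mul _ _ _ _ _ Function.bijective_id, transpose_one,
      one_mul]
  have hUU' : Uᵀ * U = diagonal fun _ ↦ (m + 1 : R) := by
    ext i j
    have hij : (Uᵀ * U) i j = #{v | f v = i ∧ f v = j} := by
      simp [U, mul_apply, one_apply, ← ite_and, and_comm, eq_comm (a := i)]
    rw [hij, diagonal_apply]
    split_ifs with h
    · simp [← h, hf]
    · simp [filter_false_of_mem fun v _ (hv : f v = i ∧ f v = j) ↦ h (hv.1.symm.trans hv.2)]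
  rw [← hUU, ← smul_mul, charpoly_mul_comm_of_le _ _ (by omega), Matrix.mul_smul, hUU',
    ← diagonal_smul, charpoly_diagonal, hV]
  simp

end Charpoly

lemma eq_of_sq_eq_sq_of_monic {R : Type*} [CommRing R] [NoZeroDivisors R] {p r : R[X]}
    (hp : p.Monic) (hr : r.Monic) (h : p ^ 2 = r ^ 2) : p = r := by
  rcases sq_eq_sq_iff_eq_or_eq_neg.1 h with h | rfl
  · exact h
  · have : (-1 : R) = 1 := by simpa [Monic, hr.leadingCoeff] using hp
    rw [← neg_one_mul, ← C_1, ← C_neg, this, C_1, one_mul]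

lemma eq_of_sum_eq_of_sum_sq_eq {ι R : Type*} [CommRing R] [LinearOrder R] [IsStrictOrderedRing R]
    {s : Finset ι} {f : ι → R} {a : R} (h₁ : ∑ i ∈ s, f i = #s * a)
    (h₂ : ∑ i ∈ s, f i ^ 2 = #s * a ^ 2) {i : ι} (hi : i ∈ s) : f i = a := by
  have hvar : ∑ i ∈ s, (f i - a) ^ 2 = 0 := by
    simp only [sub_sq, sum_add_distrib, sum_sub_distrib, ← sum_mul, ← mul_sum, h₁, h₂, sum_const,
      nsmul_eq_mul]
    ring
  have := (sum_eq_zero_iff_of_nonneg fun i _ ↦ sq_nonneg (f i - a)).1 hvar i hi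
  exact sub_eq_zero.1 (pow_eq_zero_iff two_ne_zero |>.1 this)

lemma sum_fiber_erase {V ι R : Type*} [Fintype V] [DecidableEq V] [DecidableEq ι] [AddCommGroup R]
    {c : V → ι} {f : V → R} {u : V} (hf : ∀ w, c u ≠ c w → f w = 0) :
    ∑ w ∈ ({w | c w = c u} : Finset V).erase u, f w = ∑ w, f w - f u := by
  rw [sum_erase_eq_sub (by simp), sum_filter_of_ne]
  intro w _ hw
  by_contra h
  exact hw (hf w (Ne.symm h))

section Bipartite

variable {V : Type*} [Fintype V] {G : SimpleGraph V} [DecidableRel G.Adj] {m k μ : ℕ}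
  (c : G.Coloring (Fin 2))

lemma card_colorClass (hk : G.IsRegularOfDegree k) (hk0 : k ≠ 0) (hV : Fintype.card V = 2 * m)
    (i : Fin 2) : #{v | c v = i} = m := by
  have hbip : G.IsBipartiteWith (({v | c v = 0} : Finset V) : Set V)
      ({v | c v = 1} : Finset V) := by
    constructor
    · rw [disjoint_coe]
      exact disjoint_filter.2 fun v _ h0 h1 ↦ by simp [h0] at h1
    · intro v w hvw
      have := c.valid hvw
      simp only [coe_filter_univ, Set.mem_ofPred_eq]
      omega
  have hdeg : #{v | c v = 0} * k = #{v | c v = 1} * k := by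
    simpa [hk.degree_eq] using isBipartiteWith_sum_degrees_eq hbip
  have heq : #{v | c v = 0} = #{v | c v = 1} :=
    Nat.eq_of_mul_eq_mul_right (Nat.pos_of_ne_zero hk0) hdeg
  have hsum : Fintype.card V = #{v | c v = 0} + #{v | c v = 1} := by
    rw [← card_univ, card_eq_sum_card_fiberwise (f := c) (t := univ) (by simp), Fin.sum_univ_two]
  fin_cases i <;> simp only [Fin.zero_eta, Fin.mk_one] <;> omega

variable [DecidableEq V]

lemma adjMatrix_sq_apply_of_color_eq (hc : ∀ i, #{v | c v = i} = m + 1)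
    (hk : G.IsRegularOfDegree k) (hμ : (μ * m : ℤ) = k * (k - 1))
    (hpath : ∀ ⦃u v⦄, G.Adj u v →
      (Nat.card {p : G.Walk v u // p.IsPath ∧ p.length = 3} : ℤ) = (k - 1) * (μ - 1))
    {u w : V} (huw : u ≠ w) (h : c u = c w) : (G.adjMatrix ℤ ^ 2) u w = μ := by
  have hcard : (#(({w | c w = c u} : Finset V).erase u) : ℤ) = m := by
    simp [card_erase_of_mem, hc]
  have hdiag : (G.adjMatrix ℤ ^ 2) u u = k := by simp [adjMatrix_sq_apply, hk.degree_eq]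
  have hzero (w : V) : c u ≠ c w → (G.adjMatrix ℤ ^ 2) u w = 0 :=
    adjMatrix_sq_apply_of_color_ne c
  have hcube (v) (hv : v ∈ G.neighborFinset u) :
      (G.adjMatrix ℤ ^ 3) v u = (k - 1) * (μ - 1) + 2 * k - 1 := by
    rw [mem_neighborFinset] at hv
    rw [adjMatrix_pow_three_apply hv.symm, hpath hv, hk.degree_eq, hk.degree_eq]
    ring
  refine eq_of_sum_eq_of_sum_sq_eq (s := ({w | c w = c u} : Finset V).erase u) ?sum ?sum_sq
    (by simp [h, huw.symm])
  case sum =>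
    rw [sum_fiber_erase hzero, sum_adjMatrix_pow_apply hk, hdiag, hcard]
    linear_combination -hμ
  case sum_sq =>
    rw [sum_fiber_erase fun w hw ↦ by rw [hzero w hw, zero_pow two_ne_zero],
      sum_sq_adjMatrix_sq_apply, sum_congr rfl hcube, sum_const, card_neighborFinset_eq_degree,
      hk.degree_eq, hdiag, hcard, nsmul_eq_mul]
    linear_combination (-(μ : ℤ)) * hμ

lemma adjMatrix_sq_eq (hc : ∀ i, #{v | c v = i} = m + 1)
    (hk : G.IsRegularOfDegree k) (hμ : (μ * m : ℤ) = k * (k - 1))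
    (hpath : ∀ ⦃u v⦄, G.Adj u v →
      (Nat.card {p : G.Walk v u // p.IsPath ∧ p.length = 3} : ℤ) = (k - 1) * (μ - 1)) :
    G.adjMatrix ℤ ^ 2 =
      scalar V (k - μ : ℤ) + (μ : ℤ) • (1 : Matrix (Fin 2) (Fin 2) ℤ).submatrix c c := by
  ext u w
  rw [Matrix.add_apply, Matrix.smul_apply, submatrix_apply, one_apply, scalar_apply,
    diagonal_apply, smul_eq_mul]
  split_ifs with huw h h
  · subst huw
    simp [adjMatrix_sq_apply, hk.degree_eq]
  · exact absurd (congrArg c huw) h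
  · simp [adjMatrix_sq_apply_of_color_eq c hc hk hμ hpath huw h]
  · simp [adjMatrix_sq_apply_of_color_ne c h]

lemma charpoly_adjMatrix_of_sq_eq {R : Type*} [CommRing R] [NoZeroDivisors R]
    (hc : ∀ i, #{v | c v = i} = m + 1) {a b r : R} (hr : r ^ 2 = a + b * (m + 1))
    (hA : G.adjMatrix R ^ 2 =
      scalar V a + b • (1 : Matrix (Fin 2) (Fin 2) R).submatrix c c) :
    (G.adjMatrix R).charpoly = (X - C r) * (X + C r) * (X ^ 2 - C a) ^ m := by
  have hA' : (G.adjMatrix R ^ 2).charpoly = (X - C a) ^ (2 * m) * (X - C (r ^ 2)) ^ 2 := by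
    rw [hA, add_comm, ← sub_neg_eq_add, ← map_neg, charpoly_sub_scalar,
      charpoly_smul_one_submatrix hc, hr]
    simp [sub_eq_add_neg, add_assoc, add_comm]
  refine eq_of_sq_eq_sq_of_monic (charpoly_monic _) (((monic_X_sub_C _).mul (monic_X_add_C _)).mul
    ((monic_X_pow_sub_C _ two_ne_zero).pow _)) ?_
  calc (G.adjMatrix R).charpoly ^ 2
    _ = expand R 2 (G.adjMatrix R ^ 2).charpoly := by
      rw [← charpoly_mul_charpoly_neg, charpoly_neg_adjMatrix c, sq]
    _ = (X ^ 2 - C a) ^ (2 * m) * (X ^ 2 - C (r ^ 2)) ^ 2 := by simp [hA']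
    _ = ((X - C r) * (X + C r) * (X ^ 2 - C a) ^ m) ^ 2 := by rw [C_pow]; ring

end Bipartite

section EdgeGirthRegular

variable {V : Type*} {G : SimpleGraph V} {n k g lam : ℕ}

lemma card_isPath_of_isEGR (h : G.IsEGR n k (g + 1) lam) (hg : g ≠ 1) {u v : V}
    (huv : G.Adj u v) : Nat.card {p : G.Walk v u // p.IsPath ∧ p.length = g} = lam := by
  have := h.2.2.2.2 u v huv
  rw [card_isCycle_mem_edges huv hg] at this
  exact Nat.eq_of_mul_eq_mul_left two_pos this

lemma degree_ne_zero_of_isEGR (h : G.IsEGR n k g lam) : k ≠ 0 := by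
  rintro rfl
  have := h.1
  have hbot : G = ⊥ := by
    ext u v
    have hu : G.neighborSet u = ∅ := (Set.ncard_eq_zero (Set.toFinite _)).1 (h.2.2.1 u)
    simpa using (Set.ext_iff.1 hu v).1
  have hgirth := h.2.2.2.1
  simp [hbot] at hgirth

lemma isRegularOfDegree_of_isEGR [G.LocallyFinite] (h : G.IsEGR n k g lam) :
    G.IsRegularOfDegree k := fun v ↦ by
  rw [← h.2.2.1 v, ← coe_neighborFinset, Set.ncard_coe_finset, card_neighborFinset_eq_degree]

end EdgeGirthRegular

theorem pencil_egr_spectrum_general {V R : Type*} [Fintype V] [DecidableEq V] [CommRing R]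
    {G : SimpleGraph V} [DecidableRel G.Adj] {m k lam μ : ℕ} (hbip : G.Colorable 2)
    (h : G.IsEGR (2 * (m + 1)) k 4 lam) (hμ : (μ * m : ℤ) = k * (k - 1))
    (hlam : (lam : ℤ) = (k - 1) * (μ - 1)) :
    (G.adjMatrix R).charpoly =
      (X - C (k : R)) * (X + C (k : R)) * (X ^ 2 - C (k - μ : R)) ^ m := by
  obtain ⟨c⟩ := hbip
  have hk := isRegularOfDegree_of_isEGR h
  have hV : Fintype.card V = 2 * (m + 1) := by rw [← Nat.card_eq_fintype_card, h.2.1]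
  have hc := card_colorClass c hk (degree_ne_zero_of_isEGR h) hV
  have hpath ⦃u v : V⦄ (huv : G.Adj u v) :
      (Nat.card {p : G.Walk v u // p.IsPath ∧ p.length = 3} : ℤ) = (k - 1) * (μ - 1) := by
    rw [card_isPath_of_isEGR h (by decide) huv, hlam]
  have hℤ : (G.adjMatrix ℤ).charpoly =
      (X - C (k : ℤ)) * (X + C (k : ℤ)) * (X ^ 2 - C (k - μ : ℤ)) ^ m :=
    charpoly_adjMatrix_of_sq_eq c hc (by linear_combination -hμ) (adjMatrix_sq_eq c hc hk hμ hpath)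
  have hmap : G.adjMatrix R = (G.adjMatrix ℤ).map (Int.castRingHom R) := by
    ext
    simp [adjMatrix_apply]
  rw [hmap, charpoly_map, hℤ]
  simp

/-- Let `q ≥ 2` and let `G` be a bipartite `egr(2(q³+q²+q+1), q²+q+1, 4, q³+q²)` graph.
Then the characteristic polynomial of its adjacency matrix over `ℝ` is
`(X - (q²+q+1))(X + (q²+q+1))(X² - q²)^(q³+q²+q)`, i.e. the spectrum of `G` is
`{±(q²+q+1)` with multiplicity `1`, `±q` with multiplicity `q³+q²+q}`. -/
theorem pencil_egr_spectrum (q : ℕ) (hq : 2 ≤ q)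
    {V : Type*} [Fintype V] [DecidableEq V] (G : SimpleGraph V) [DecidableRel G.Adj]
    (hbip : G.Colorable 2)
    (h : G.IsEGR (2 * (q ^ 3 + q ^ 2 + q + 1)) (q ^ 2 + q + 1) 4 (q ^ 3 + q ^ 2)) :
    (G.adjMatrix ℝ).charpoly =
      (Polynomial.X - Polynomial.C ((q : ℝ) ^ 2 + q + 1)) *
        (Polynomial.X + Polynomial.C ((q : ℝ) ^ 2 + q + 1)) *
        (Polynomial.X ^ 2 - Polynomial.C ((q : ℝ) ^ 2)) ^ (q ^ 3 + q ^ 2 + q) := by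
  simpa using pencil_egr_spectrum_general (R := ℝ) (m := q ^ 3 + q ^ 2 + q) (μ := q + 1) hbip h
    (by push_cast; ring) (by push_cast; ring)
end
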